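/- Let Λ be a cyclic Nakayama artin algebra of infinite global dimension. Then φdim Λ ≠ 1. -/

import Mathlib

/-!
The `φ`-dimension of a cyclic Nakayama algebra is either `0` or at least `2`.

By Schanuel's lemma, `[M] ↦ [Ω M]` extends to an endomorphism `L` (`opL`) of `K₀`, so the ranks of
the groups `L^t ⟨add M⟩` are nonincreasing; the groups are finitely generated because every
indecomposable is a quotient of some uniserial `P i`. Two cases are distinguished according to the
radicals of the indecomposable projectives.

If no `rad (P i)` is projective, then `rad (P i)` is a proper quotient of `P (i + 1)`, so lengths
do not decrease around the cycle and all `P i` have the same length `c` (`c_const`). An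
indecomposable is determined by its top `S i` and its length `l`, and for `l < c` its second syzygy
has top `S (i + c)` and length `l`. Hence `L^{2N}` fixes the class of every indecomposable, the ranks
are constant, and `φ` vanishes identically (`phi_eq_zero`).

Otherwise some `rad (P i)` is projective, but not all of them are, since the length drops by one
from `P i` to `P (i + 1)` whenever `rad (P i)` is projective. So there is an `i` for which
`A = rad (P i)` is not projective while `Q = rad (P (i + 1))` is (`exists_descent`). Take a
surjection `g : P (i + 1) → A` and put `B = g Q`. As `ker g ≤ Q`, the modules `A` and `B` have the
same syzygy class `[ker g]`, and they are themselves the syzygies of `P i / A` and `P i / B`. The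
element `[A] - [B]` of `L ⟨add (P i / A ⊕ P i / B)⟩` is therefore killed by `L`. It has infinite
order: the length of the stable homomorphism module `Hom(A, -)` over the base ring is a functional on
`K₀` (`exists_stable_functional`) with a larger value on `A` than on `B` (`length_stHom_lt`). Thus
the rank drops from `t = 1` to `t = 2`, and `φ (P i / A ⊕ P i / B) ≥ 2` (`exists_two_le_phi`).
-/

/-!
Common definitions: Igusa–Todorov φ-function, syzygies, and cyclic Nakayama
algebras presented by monomial relations, following E. Sen,
"The φ-dimension of cyclic Nakayama algebras".
-/

noncomputable section

namespace PhiDim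

variable (Λ : Type) [Ring Λ]

/-- A module is *uniserial* if its submodules are totally ordered by inclusion. -/
def IsUniserial (M : ModuleCat.{0} Λ) : Prop :=
  ∀ N₁ N₂ : Submodule Λ M, N₁ ≤ N₂ ∨ N₂ ≤ N₁

/-- A module is *indecomposable* if it is nonzero and admits no nontrivial
direct sum decomposition. -/
def Indec (M : ModuleCat.{0} Λ) : Prop :=
  Nontrivial M ∧ ∀ N N' : Submodule Λ M, IsCompl N N' → N = ⊥ ∨ N' = ⊥

/-- `X` is (isomorphic to) a direct summand of `M`. -/
def IsSummand (X M : ModuleCat.{0} Λ) : Prop :=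
  ∃ N N' : Submodule Λ M, IsCompl N N' ∧ Nonempty (X ≃ₗ[Λ] N)

/-- `f : P → M` is a projective cover: `P` is projective, `f` is surjective and
its kernel is superfluous in `P`. -/
def IsProjCover {P M : ModuleCat.{0} Λ} (f : P →ₗ[Λ] M) : Prop :=
  Module.Projective Λ P ∧ Function.Surjective f ∧
    ∀ N : Submodule Λ P, N ⊔ LinearMap.ker f = ⊤ → N = ⊤

/-- `Y` is (isomorphic to) the first syzygy `Ω M`, i.e. the kernel of a
projective cover of `M`. -/
def IsSyzygy (Y M : ModuleCat.{0} Λ) : Prop :=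
  ∃ (P : ModuleCat.{0} Λ) (f : P →ₗ[Λ] M), IsProjCover Λ f ∧
    Nonempty (Y ≃ₗ[Λ] LinearMap.ker f)

/-- `Y` is (isomorphic to) the `n`-th syzygy `Ω^n M`. -/
def IsNthSyzygy : ℕ → ModuleCat.{0} Λ → ModuleCat.{0} Λ → Prop
  | 0, Y, M => Nonempty (Y ≃ₗ[Λ] M)
  | n + 1, Y, M => ∃ Z : ModuleCat.{0} Λ, IsSyzygy Λ Z M ∧ IsNthSyzygy n Y Z

/-- `M` is `Ω`-periodic: `Ω^k M ≅ M` for some `k ≥ 1`. -/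
def IsPeriodic (M : ModuleCat.{0} Λ) : Prop :=
  ∃ k : ℕ, 1 ≤ k ∧ IsNthSyzygy Λ k M M

/-- Projective dimension at most `n` (via minimal projective resolutions:
the `n`-th syzygy is projective). -/
def PdimLE (M : ModuleCat.{0} Λ) (n : ℕ) : Prop :=
  ∃ Y : ModuleCat.{0} Λ, IsNthSyzygy Λ n Y M ∧ Module.Projective Λ Y

/-- `M` has infinite projective dimension. -/
def HasInfinitePdim (M : ModuleCat.{0} Λ) : Prop :=
  ¬ ∃ n : ℕ, PdimLE Λ M n

/-- The (left) global dimension is at most `n`: every finitely generated module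
has projective dimension at most `n`. -/
def GlobalDimLE (n : ℕ) : Prop :=
  ∀ M : ModuleCat.{0} Λ, Module.Finite Λ M → PdimLE Λ M n

/-- `Λ` has infinite global dimension. -/
def HasInfiniteGlobalDim : Prop := ¬ ∃ n : ℕ, GlobalDimLE Λ n

/-- `M` has composition length `n`. -/
def HasLength (M : ModuleCat.{0} Λ) (n : ℕ) : Prop :=
  ∃ s : CompositionSeries (Submodule Λ M), s.head = ⊥ ∧ s.last = ⊤ ∧ s.length = n

/-- The socle of a uniserial module: the smallest nonzero submodule. -/
def socle (M : Type) [AddCommGroup M] [Module Λ M] : Submodule Λ M :=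
  sInf {N : Submodule Λ M | N ≠ ⊥}

/-- The radical of a uniserial (local) module: the largest proper submodule. -/
def radical (M : Type) [AddCommGroup M] [Module Λ M] : Submodule Λ M :=
  sSup {N : Submodule Λ M | N ≠ ⊤}

/-- `soc M ≅ T`. -/
def SocIso (M T : ModuleCat.{0} Λ) : Prop :=
  Nonempty (socle Λ M ≃ₗ[Λ] T)

/-- `top M = M / rad M ≅ T`. -/
def TopIso (M T : ModuleCat.{0} Λ) : Prop :=
  Nonempty ((M ⧸ radical Λ M) ≃ₗ[Λ] T)

/-- `T` is a composition factor (a simple subquotient) of `M`. -/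
def IsCompFactorOf (T M : ModuleCat.{0} Λ) : Prop :=
  ∃ (N₁ : Submodule Λ M) (N₀ : Submodule Λ N₁),
    Nonempty ((N₁ ⧸ N₀) ≃ₗ[Λ] T)

/-- The number of composition factors of a composition series `s` of `M`
isomorphic to `T`. -/
def factorCount (M : ModuleCat.{0} Λ) (s : CompositionSeries (Submodule Λ M))
    (T : ModuleCat.{0} Λ) : ℕ :=
  Nat.card {i : Fin s.length //
    Nonempty ((s i.succ ⧸ Submodule.comap (s i.succ).subtype (s i.castSucc)) ≃ₗ[Λ] T)}

/-! ### The Igusa–Todorov function φ -/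

/-- Finitely generated modules. -/
def FGMod := {M : ModuleCat.{0} Λ // Module.Finite Λ M}

/-- Generators of the relations defining `K₀`: `[C] - [A] - [B]` for `C ≅ A ⊕ B`,
and `[P]` for `P` projective. -/
def K0RelSet : Set (FreeAbelianGroup (FGMod Λ)) :=
  {x | ∃ A B C : FGMod Λ, Nonempty ((C.1 : Type) ≃ₗ[Λ] ((A.1 : Type) × (B.1 : Type))) ∧
        x = FreeAbelianGroup.of C - FreeAbelianGroup.of A - FreeAbelianGroup.of B} ∪
  {x | ∃ P : FGMod Λ, Module.Projective Λ P.1 ∧ x = FreeAbelianGroup.of P}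

def K0Rel : AddSubgroup (FreeAbelianGroup (FGMod Λ)) :=
  AddSubgroup.closure (K0RelSet Λ)

/-- `K₀`: the free abelian group on finitely generated modules, modulo
`[A ⊕ B] = [A] + [B]` and `[P] = 0` for projective `P`. -/
def K0 := FreeAbelianGroup (FGMod Λ) ⧸ K0Rel Λ

instance : AddCommGroup (K0 Λ) := QuotientAddGroup.Quotient.addCommGroup _

/-- The class `[M]` of a finitely generated module in `K₀`. -/
def classOf (M : FGMod Λ) : K0 Λ := QuotientAddGroup.mk (FreeAbelianGroup.of M)

/-- Generators of the subgroup `L^t ⟨add M⟩` of `K₀`: classes of `t`-th syzygies of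
the indecomposable direct summands of `M`. -/
def addGens (M : ModuleCat.{0} Λ) (t : ℕ) : Set (K0 Λ) :=
  {k | ∃ X : ModuleCat.{0} Λ, Indec Λ X ∧ IsSummand Λ X M ∧
        ∃ Y : FGMod Λ, IsNthSyzygy Λ t Y.1 X ∧ k = classOf Λ Y}

/-- The rank of `L^t ⟨add M⟩`. -/
def syzygyRank (M : ModuleCat.{0} Λ) (t : ℕ) : Cardinal :=
  Module.rank ℤ (AddSubgroup.closure (addGens Λ M t))

/-- The Igusa–Todorov function
`φ(M) = min { t | rank L^t ⟨add M⟩ = rank L^{t+j} ⟨add M⟩ for all j ≥ 1 }`. -/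
def phi (M : ModuleCat.{0} Λ) : ℕ :=
  sInf {t : ℕ | ∀ j : ℕ, 1 ≤ j → syzygyRank Λ M (t + j) = syzygyRank Λ M t}

/-- `φdim Λ = sup { φ(M) | M a finitely generated Λ-module }`. -/
def phiDim : ℕ∞ := ⨆ M : FGMod Λ, (phi Λ M.1 : ℕ∞)

/-- Isomorphism of modules as a setoid on `ModuleCat Λ`. -/
def isoSetoid : Setoid (ModuleCat.{0} Λ) where
  r M N := Nonempty (M ≃ₗ[Λ] N)
  iseqv := ⟨fun M => ⟨LinearEquiv.refl Λ M⟩, fun ⟨e⟩ => ⟨e.symm⟩, fun ⟨e⟩ ⟨f⟩ => ⟨e.trans f⟩⟩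

/-- `α(X)`: the number of pairwise non-isomorphic, non-projective, indecomposable
direct summands of `X`. -/
def alpha (X : ModuleCat.{0} Λ) : ℕ :=
  Nat.card {c : Quotient (isoSetoid Λ) // ∃ Y : ModuleCat.{0} Λ,
    Quotient.mk (isoSetoid Λ) Y = c ∧ Indec Λ Y ∧ ¬ Module.Projective Λ Y ∧ IsSummand Λ Y X}

/-! ### Cyclic Nakayama algebras presented by monomial relations -/

/-- A cyclic Nakayama artin algebra `Λ` on `N ≥ 3` vertices, presented by an
irredundant system of `r` monomial relations `α_{k_{2j}} ⋯ α_{k_{2j-1}} = 0`.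

* `S i` (for `i : ZMod N`) are the simple modules attached to the vertices of the
  cyclic quiver, `P i` a projective cover of `S i`, and `c i` the composition length
  of `P i` (the Kupisch series).
* `layer` expresses that the arrows of the quiver are exactly `α_i : i → i+1`:
  the radical of an indecomposable module with top `S i`, when nonzero, has top `S (i+1)`.
* `kOdd j = k_{2j-1}` and `kEven j = k_{2j}` record the start and end indices of the
  `j`-th relation; irredundancy and completeness of the system of relations is recorded
  by `relation_starts` (the chain of inclusions `P_v ↪ P_{v-1}` breaks exactly at the
  starting vertices of the relations); `relation_ends` says that the `j`-th relation
  is a path from `k_{2j-1}` to `k_{2j} + 1` consisting of `c (k_{2j-1})` arrows. -/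
structure CyclicNakayama (R : Type) (Λ : Type) [CommRing R] [Ring Λ] [Algebra R Λ] where
  artinianBase : IsArtinianRing R
  finiteAlgebra : Module.Finite R Λ
  N : ℕ
  three_le_N : 3 ≤ N
  r : ℕ
  one_le_r : 1 ≤ r
  S : ZMod N → ModuleCat.{0} Λ
  S_simple : ∀ i, IsSimpleModule Λ (S i)
  S_complete : ∀ T : ModuleCat.{0} Λ, IsSimpleModule Λ T → ∃ i, Nonempty (T ≃ₗ[Λ] S i)
  S_distinct : ∀ i j, Nonempty (S i ≃ₗ[Λ] S j) → i = j
  nakayama : ∀ M : ModuleCat.{0} Λ, Module.Finite Λ M → Indec Λ M → IsUniserial Λ M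
  P : ZMod N → ModuleCat.{0} Λ
  P_finite : ∀ i, Module.Finite Λ (P i)
  P_projective : ∀ i, Module.Projective Λ (P i)
  P_cover : ∀ i, ∃ f : P i →ₗ[Λ] S i, IsProjCover Λ f
  c : ZMod N → ℕ
  P_length : ∀ i, HasLength Λ (P i) (c i)
  two_le_c : ∀ i, 2 ≤ c i
  layer : ∀ M : ModuleCat.{0} Λ, Module.Finite Λ M → Indec Λ M → ∀ i : ZMod N,
    TopIso Λ M (S i) → radical Λ M ≠ ⊥ →
      TopIso Λ (ModuleCat.of Λ (radical Λ M)) (S (i + 1))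
  kOdd : ZMod r → ZMod N
  kEven : ZMod r → ZMod N
  kOdd_mono : ∀ j j' : ZMod r, j.val < j'.val → (kOdd j).val < (kOdd j').val
  relation_starts : ∀ v : ZMod N, (∃ j, kOdd j = v) ↔ c v ≠ c (v + 1) + 1
  relation_ends : ∀ j, kEven j + 1 = kOdd j + (c (kOdd j) : ZMod N)
  soc_min : ∀ j, SocIso Λ (P (kOdd j)) (S (kEven j))
  soc_classes : ∀ v : ZMod N, ∃ j, SocIso Λ (P v) (S (kEven j))

variable {R : Type} [CommRing R]
variable {Λ} [Algebra R Λ]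

/-- `D` is (a representative of) the module `Δ_j`: a shortest indecomposable module
with top `S_{k_{2(j-1)} + 1}` and socle `S_{k_{2j}}`. -/
def IsDelta (pres : CyclicNakayama R Λ) (j : ZMod pres.r) (D : ModuleCat.{0} Λ) : Prop :=
  Module.Finite Λ D ∧ Indec Λ D ∧
    TopIso Λ D (pres.S (pres.kEven (j - 1) + 1)) ∧ SocIso Λ D (pres.S (pres.kEven j)) ∧
    ∀ D' : ModuleCat.{0} Λ, Module.Finite Λ D' → Indec Λ D' →
      TopIso Λ D' (pres.S (pres.kEven (j - 1) + 1)) → SocIso Λ D' (pres.S (pres.kEven j)) →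
      ∀ n n' : ℕ, HasLength Λ D n → HasLength Λ D' n' → n ≤ n'

/-- `M` is a `Δ`-module: it admits a finite filtration whose successive subquotients
are isomorphic to modules among `Δ_1, …, Δ_r`. -/
def IsDeltaModule (pres : CyclicNakayama R Λ) (Δ : ZMod pres.r → ModuleCat.{0} Λ)
    (M : ModuleCat.{0} Λ) : Prop :=
  ∃ (n : ℕ) (F : Fin (n + 1) → Submodule Λ M), Monotone F ∧ F 0 = ⊥ ∧ F (Fin.last n) = ⊤ ∧
    ∀ i : Fin n, ∃ j : ZMod pres.r,
      Nonempty ((F i.succ ⧸ Submodule.comap (F i.succ).subtype (F i.castSucc)) ≃ₗ[Λ] Δ j)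

end PhiDim

namespace PhiDim

/-! ### Stable homomorphism modules -/

section Stable

variable (R Λ : Type) [CommRing R] [Ring Λ] [Algebra R Λ]
variable (A : Type) [AddCommGroup A] [Module Λ A]

/-- The `R`-submodule of `Hom_Λ(A, M)` of the homomorphisms that factor through a projective
module. It is encoded as the set of maps that lift along the canonical surjection onto `M` from
the free module on the underlying set of `M`. -/
def projHom (M : Type) [AddCommGroup M] [Module Λ M] [Module R M] [IsScalarTower R Λ M] :
    Submodule R (A →ₗ[Λ] M) :=
  LinearMap.range (LinearMap.compRight R (Finsupp.linearCombination Λ (id : M → M)) :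
    (A →ₗ[Λ] (M →₀ Λ)) →ₗ[R] (A →ₗ[Λ] M))

/-- The stable homomorphism module: `Hom_Λ(A, M)` modulo maps factoring through projectives. -/
abbrev StHom (M : Type) [AddCommGroup M] [Module Λ M] [Module R M] [IsScalarTower R Λ M] : Type :=
  (A →ₗ[Λ] M) ⧸ projHom R Λ A M

variable {Λ A}
variable {M N : Type} [AddCommGroup M] [Module Λ M] [Module R M] [IsScalarTower R Λ M]
  [AddCommGroup N] [Module Λ N] [Module R N] [IsScalarTower R Λ N]

/-- `projHom` contains every map which factors through some projective module. -/
lemma comp_mem_projHom {P : Type} [AddCommGroup P] [Module Λ P] [Module.Projective Λ P]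
    (p : P →ₗ[Λ] M) (g : A →ₗ[Λ] P) : p ∘ₗ g ∈ projHom R Λ A M := by
  obtain ⟨h, hh⟩ := Module.projective_lifting_property
    (Finsupp.linearCombination Λ (id : M → M)) p (Finsupp.linearCombination_id_surjective Λ M)
  exact ⟨h ∘ₗ g, by rw [LinearMap.compRight_apply, ← LinearMap.comp_assoc, hh]⟩

lemma exists_factor_of_mem_projHom {f : A →ₗ[Λ] M} (hf : f ∈ projHom R Λ A M) :
    ∃ g : A →ₗ[Λ] (M →₀ Λ), f = Finsupp.linearCombination Λ (id : M → M) ∘ₗ g := by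
  obtain ⟨g, hg⟩ := hf
  exact ⟨g, hg.symm⟩

lemma comp_mem_projHom' (f : M →ₗ[Λ] N) {u : A →ₗ[Λ] M} (hu : u ∈ projHom R Λ A M) :
    f ∘ₗ u ∈ projHom R Λ A N := by
  obtain ⟨g, rfl⟩ := exists_factor_of_mem_projHom R hu
  rw [← LinearMap.comp_assoc]
  exact comp_mem_projHom R _ _

variable (A) in
/-- Functoriality of the stable homomorphism module in its second argument. -/
def stMap (f : M →ₗ[Λ] N) : StHom R Λ A M →ₗ[R] StHom R Λ A N :=
  Submodule.mapQ _ _ (LinearMap.compRight R f) fun _ hu => comp_mem_projHom' R f hu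

lemma stMap_mk (f : M →ₗ[Λ] N) (u : A →ₗ[Λ] M) :
    stMap R A f (Submodule.Quotient.mk u) = Submodule.Quotient.mk (f ∘ₗ u) := rfl

variable (A) in
lemma length_stHom_prod {C : Type} [AddCommGroup C] [Module Λ C] [Module R C] [IsScalarTower R Λ C]
    (e : C ≃ₗ[Λ] (M × N)) :
    Module.length R (StHom R Λ A C) =
      Module.length R (StHom R Λ A M) + Module.length R (StHom R Λ A N) := by
  refine Module.length_eq_add_of_exact (stMap R A (e.symm.toLinearMap ∘ₗ LinearMap.inl Λ M N))
    (stMap R A (LinearMap.snd Λ M N ∘ₗ e.toLinearMap)) ?_ ?_ ?_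
  · refine Function.LeftInverse.injective (g := stMap R A (LinearMap.fst Λ M N ∘ₗ e.toLinearMap)) ?_
    intro x
    obtain ⟨u, rfl⟩ := Submodule.Quotient.mk_surjective _ x
    rw [stMap_mk, stMap_mk]
    congr 1
    ext a; simp
  · refine Function.RightInverse.surjective
      (g := stMap R A (e.symm.toLinearMap ∘ₗ LinearMap.inr Λ M N)) ?_
    intro x
    obtain ⟨u, rfl⟩ := Submodule.Quotient.mk_surjective _ x
    rw [stMap_mk, stMap_mk]
    congr 1
    ext a; simp
  · intro x
    obtain ⟨u, rfl⟩ := Submodule.Quotient.mk_surjective _ x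
    constructor
    · intro h
      rw [stMap_mk, Submodule.Quotient.mk_eq_zero] at h
      refine ⟨Submodule.Quotient.mk ((LinearMap.fst Λ M N ∘ₗ e.toLinearMap) ∘ₗ u), ?_⟩
      rw [stMap_mk, Submodule.Quotient.eq]
      have h2 := neg_mem (comp_mem_projHom' R (e.symm.toLinearMap ∘ₗ LinearMap.inr Λ M N) h)
      convert h2 using 1
      ext a
      apply e.injective
      ext <;> simp
    · rintro ⟨y, hy⟩
      obtain ⟨v, rfl⟩ := Submodule.Quotient.mk_surjective _ y
      rw [← hy, stMap_mk, stMap_mk]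
      rw [Submodule.Quotient.mk_eq_zero]
      convert Submodule.zero_mem _
      ext a; simp

variable (A) in
lemma length_stHom_projective [Module.Projective Λ M] : Module.length R (StHom R Λ A M) = 0 := by
  rw [Module.length_eq_zero_iff]
  refine ⟨fun x y => ?_⟩
  obtain ⟨u, rfl⟩ := Submodule.Quotient.mk_surjective _ x
  obtain ⟨v, rfl⟩ := Submodule.Quotient.mk_surjective _ y
  rw [Submodule.Quotient.eq]
  exact comp_mem_projHom R (P := M) LinearMap.id (u - v)

lemma length_stHom_ne_top [IsArtinianRing R] [Module.Finite R Λ] [Module.Finite Λ A]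
    [Module.Finite Λ M] : Module.length R (StHom R Λ A M) ≠ ⊤ := by
  obtain ⟨n, s, hs⟩ := Module.Finite.exists_fin (R := Λ) (M := A)
  have : Module.Finite R M := Module.Finite.trans Λ M
  let ev : (A →ₗ[Λ] M) →ₗ[R] (Fin n → M) :=
    { toFun := fun f k => f (s k), map_add' := fun _ _ => rfl, map_smul' := fun _ _ => rfl }
  have hev : Function.Injective ev := by
    intro f g hfg
    apply LinearMap.ext_on_range hs
    exact fun i => congrFun hfg i
  have : Module.length R (A →ₗ[Λ] M) ≠ ⊤ :=
    ne_top_of_le_ne_top Module.length_ne_top (Module.length_le_of_injective ev hev)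
  exact ne_top_of_le_ne_top this
    (Module.length_le_of_surjective (Submodule.mkQ _) (Submodule.mkQ_surjective _))

/-- Stable homomorphisms distinguish a nonprojective module `A` from a superfluous submodule `B`,
provided that `B` is the image of a projective `Q ≥ ker g` under a surjection `g : P → A` with `P`
projective. If a map `A → B` factors through a projective after composition with `B ↪ A`, then it
lifts to `P`, with image in `Q`, and so factors through `Q`; hence `B ↪ A` induces an injection. The
identity of `A` is not in its image: otherwise some map `A → P → A` would be onto modulo `B`, hence
an automorphism, and `A` would be projective. -/
lemma length_stHom_lt [IsArtinianRing R] [Module.Finite R Λ] [Module.Finite Λ A]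
    [IsNoetherian Λ A] [Module R A] [IsScalarTower R Λ A]
    {P B : Type} [AddCommGroup P] [Module Λ P] [Module.Projective Λ P]
    [AddCommGroup B] [Module Λ B] [Module R B] [IsScalarTower R Λ B]
    (g : P →ₗ[Λ] A) (hg : Function.Surjective g) (Q : Submodule Λ P) [Module.Projective Λ Q]
    (hQ : LinearMap.ker g ≤ Q) (ι : B →ₗ[Λ] A) (hι : Function.Injective ι)
    (hB : LinearMap.range ι = Q.map g)
    (hsup : ∀ C : Submodule Λ A, LinearMap.range ι ⊔ C = ⊤ → C = ⊤)
    (hA : ¬ Module.Projective Λ A) :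
    Module.length R (StHom R Λ A B) < Module.length R (StHom R Λ A A) := by
  have hinj : Function.Injective (stMap R A ι) := by
    -- if `ι ∘ u` factors through a free module, it lifts along `g`; the lift has image in `Q`
    rw [← LinearMap.ker_eq_bot, LinearMap.ker_eq_bot']
    intro x hx
    obtain ⟨u, rfl⟩ := Submodule.Quotient.mk_surjective _ x
    rw [stMap_mk, Submodule.Quotient.mk_eq_zero] at hx
    rw [Submodule.Quotient.mk_eq_zero]
    obtain ⟨w, hw⟩ := exists_factor_of_mem_projHom R hx
    obtain ⟨h, hh⟩ := Module.projective_lifting_property g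
      (Finsupp.linearCombination Λ (id : A → A)) hg
    have hgu : ∀ a, g (h (w a)) = ι (u a) := by
      intro a
      have h2 := LinearMap.congr_fun hw a
      have h3 := LinearMap.congr_fun hh (w a)
      simp only [LinearMap.comp_apply] at h2 h3 ⊢
      rw [h3, h2]
    have hmem : ∀ a, (h ∘ₗ w) a ∈ Q := by
      intro a
      have h2 : ι (u a) ∈ Q.map g := hB ▸ LinearMap.mem_range_self ι (u a)
      obtain ⟨q, hq, hqa⟩ := h2
      have h3 : (h ∘ₗ w) a - q ∈ Q := hQ (by
        rw [LinearMap.mem_ker, map_sub, LinearMap.comp_apply, hgu, hqa, sub_self])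
      simpa using Q.add_mem h3 hq
    let e := LinearEquiv.ofInjective ι hι
    have hgQ : ∀ q : Q, (g ∘ₗ Q.subtype) q ∈ LinearMap.range ι := fun q => by
      rw [hB]; exact ⟨q, q.2, rfl⟩
    have : u = (e.symm.toLinearMap ∘ₗ LinearMap.codRestrict _ (g ∘ₗ Q.subtype) hgQ) ∘ₗ
        (LinearMap.codRestrict Q (h ∘ₗ w) hmem) := by
      ext a
      apply e.injective
      simp only [LinearMap.comp_apply, LinearEquiv.coe_coe, LinearEquiv.apply_symm_apply]
      ext
      exact (hgu a).symm
    rw [this]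
    exact comp_mem_projHom R _ _
  have hnsurj : ¬ Function.Surjective (stMap R A ι) := by
    intro hs
    obtain ⟨x, hx⟩ := hs (Submodule.Quotient.mk LinearMap.id)
    obtain ⟨u, rfl⟩ := Submodule.Quotient.mk_surjective _ x
    rw [stMap_mk, Submodule.Quotient.eq] at hx
    obtain ⟨w, hw⟩ := exists_factor_of_mem_projHom R hx
    obtain ⟨h, hh⟩ := Module.projective_lifting_property g
      (Finsupp.linearCombination Λ (id : A → A)) hg
    -- `g ∘ h ∘ w = u - id` is onto modulo `B`, hence onto, hence an automorphism of `A`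
    have hval : ∀ a, g (h (w a)) = ι (u a) - a := by
      intro a
      have h2 := LinearMap.congr_fun hw a
      have h3 := LinearMap.congr_fun hh (w a)
      simp only [LinearMap.comp_apply, LinearMap.sub_apply,
        LinearMap.id_apply] at h2 h3 ⊢
      rw [h3, ← h2]
    let k : A →ₗ[Λ] A := g ∘ₗ h ∘ₗ w
    have hk : LinearMap.range k = ⊤ := by
      apply hsup
      rw [eq_top_iff]
      intro a _
      have : a = ι (u a) + k (-a) := by
        change a = ι (u a) + g (h (w (-a)))
        rw [hval]; simp
      rw [this]
      exact Submodule.add_mem_sup (LinearMap.mem_range_self ι (u a)) ⟨-a, rfl⟩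
    have hk2 : Function.Bijective k :=
      IsNoetherian.bijective_of_surjective_endomorphism k (LinearMap.range_eq_top.1 hk)
    let e := LinearEquiv.ofBijective k hk2
    apply hA
    refine Module.Projective.of_split (h ∘ₗ w ∘ₗ e.symm.toLinearMap) g ?_
    ext a
    exact e.apply_symm_apply a
  have : Module.length R (StHom R Λ A A) = Module.length R (StHom R Λ A B) +
      Module.length R (StHom R Λ A A ⧸ LinearMap.range (stMap R A ι)) :=
    Module.length_eq_add_of_exact (stMap R A ι) (Submodule.mkQ _) hinj
      (Submodule.mkQ_surjective _) (LinearMap.exact_map_mkQ_range _)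
  have hnt : Nontrivial (StHom R Λ A A ⧸ LinearMap.range (stMap R A ι)) := by
    rw [Submodule.Quotient.nontrivial_iff]
    exact fun h => hnsurj (LinearMap.range_eq_top.1 h)
  have hf := length_stHom_ne_top R (Λ := Λ) (A := A) (M := A)
  have hBf : Module.length R (StHom R Λ A B) ≠ ⊤ := fun h => hf (by rw [this, h, top_add])
  rw [this]
  have h0 := (ENat.add_lt_add_iff_left hBf).2 (Module.length_pos (R := R)
    (M := StHom R Λ A A ⧸ LinearMap.range (stMap R A ι)))
  rwa [add_zero] at h0

end Stable

/-! ### The group `K₀` and the syzygy operator -/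

section K0

variable {Λ : Type} [Ring Λ]

/-- The class in `K₀` of an unbundled finitely generated module. -/
def cls (M : Type) [AddCommGroup M] [Module Λ M] [h : Module.Finite Λ M] : K0 Λ :=
  classOf Λ ⟨ModuleCat.of Λ M, h⟩

variable {M N P Q : Type} [AddCommGroup M] [Module Λ M] [AddCommGroup N] [Module Λ N]
  [AddCommGroup P] [Module Λ P] [AddCommGroup Q] [Module Λ Q]

lemma classOf_add (A B C : FGMod Λ) (e : (C.1 : Type) ≃ₗ[Λ] ((A.1 : Type) × (B.1 : Type))) :
    classOf Λ C = classOf Λ A + classOf Λ B := by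
  have h : FreeAbelianGroup.of C - FreeAbelianGroup.of A - FreeAbelianGroup.of B ∈ K0Rel Λ :=
    AddSubgroup.subset_closure (Or.inl ⟨A, B, C, ⟨e⟩, rfl⟩)
  have h2 : classOf Λ C - classOf Λ A - classOf Λ B = 0 :=
    (QuotientAddGroup.eq_zero_iff (N := K0Rel Λ) _).2 h
  rwa [sub_sub, sub_eq_zero] at h2

lemma classOf_projective (A : FGMod Λ) (h : Module.Projective Λ A.1) : classOf Λ A = 0 :=
  (QuotientAddGroup.eq_zero_iff (N := K0Rel Λ) _).2
    (AddSubgroup.subset_closure (Or.inr ⟨A, h, rfl⟩))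

lemma cls_prod [Module.Finite Λ M] [Module.Finite Λ N] [Module.Finite Λ P]
    (e : P ≃ₗ[Λ] (M × N)) : cls (Λ := Λ) P = cls (Λ := Λ) M + cls (Λ := Λ) N :=
  classOf_add _ _ _ e

lemma cls_projective [h : Module.Finite Λ P] [Module.Projective Λ P] : cls (Λ := Λ) P = 0 :=
  classOf_projective ⟨ModuleCat.of Λ P, h⟩ ‹_›

lemma cls_congr [Module.Finite Λ M] [Module.Finite Λ N] (e : M ≃ₗ[Λ] N) :
    cls (Λ := Λ) M = cls (Λ := Λ) N := by
  rw [cls_prod (M := N) (N := PUnit) (e.trans (LinearEquiv.prodUnique (R := Λ)).symm),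
    cls_projective (P := PUnit), add_zero]

/-- Schanuel's lemma, at the level of classes in `K₀`. -/
lemma schanuel [IsNoetherianRing Λ] [Module.Finite Λ P] [Module.Projective Λ P]
    [Module.Finite Λ Q] [Module.Projective Λ Q] (f : P →ₗ[Λ] M) (g : Q →ₗ[Λ] M)
    (hf : Function.Surjective f) (hg : Function.Surjective g) :
    cls (Λ := Λ) (LinearMap.ker f) = cls (Λ := Λ) (LinearMap.ker g) := by
  obtain ⟨s, hs⟩ := Module.projective_lifting_property f g hf
  obtain ⟨t, ht⟩ := Module.projective_lifting_property g f hg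
  have hs' : ∀ q, f (s q) = g q := LinearMap.congr_fun hs
  have ht' : ∀ p, g (t p) = f p := LinearMap.congr_fun ht
  -- `ker f × Q` and `ker g × P` are both isomorphic to the pullback of `f` and `g`
  let F : (LinearMap.ker f × Q) →ₗ[Λ] (LinearMap.ker g × P) :=
    LinearMap.prod
      (LinearMap.codRestrict _
        (LinearMap.snd Λ _ _ - t ∘ₗ ((LinearMap.ker f).subtype.coprod s)) (by
          rintro ⟨k, q⟩
          have := k.2
          rw [LinearMap.mem_ker] at this
          simp [ht', hs', this]))
      ((LinearMap.ker f).subtype.coprod s)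
  let G : (LinearMap.ker g × P) →ₗ[Λ] (LinearMap.ker f × Q) :=
    LinearMap.prod
      (LinearMap.codRestrict _
        (LinearMap.snd Λ _ _ - s ∘ₗ ((LinearMap.ker g).subtype.coprod t)) (by
          rintro ⟨k, q⟩
          have := k.2
          rw [LinearMap.mem_ker] at this
          simp [ht', hs', this]))
      ((LinearMap.ker g).subtype.coprod t)
  have e : (LinearMap.ker f × Q) ≃ₗ[Λ] (LinearMap.ker g × P) :=
    LinearEquiv.ofLinearMap F G
      (by
        apply LinearMap.ext
        rintro ⟨k, q⟩
        ext <;> simp [F, G])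
      (by
        apply LinearMap.ext
        rintro ⟨k, q⟩
        ext <;> simp [F, G])
  have h1 := cls_congr e
  rw [cls_prod (LinearEquiv.refl Λ (LinearMap.ker f × Q)),
    cls_prod (LinearEquiv.refl Λ (LinearMap.ker g × P)), cls_projective (P := P),
    cls_projective (P := Q), add_zero, add_zero] at h1
  exact h1

lemma exists_free_cover (M : FGMod Λ) :
    ∃ n : ℕ, ∃ f : (Fin n → Λ) →ₗ[Λ] (M.1 : Type), Function.Surjective f :=
  have := M.2
  Module.Finite.exists_fin' Λ M.1

/-- The class of the kernel of a chosen surjection from a finitely generated free module. By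
Schanuel's lemma this is the class of the syzygy. -/
def omegaClass [IsNoetherianRing Λ] (M : FGMod Λ) : K0 Λ :=
  cls (Λ := Λ) (LinearMap.ker (exists_free_cover M).choose_spec.choose)

/-- `omegaClass` may be computed from any surjection with finitely generated projective source. -/
lemma omegaClass_eq [IsNoetherianRing Λ] (M : FGMod Λ) [Module.Finite Λ P] [Module.Projective Λ P]
    (f : P →ₗ[Λ] (M.1 : Type)) (hf : Function.Surjective f) :
    omegaClass M = cls (Λ := Λ) (LinearMap.ker f) :=
  schanuel _ _ (exists_free_cover M).choose_spec.choose_spec hf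

lemma omegaClass_add [IsNoetherianRing Λ] (A B C : FGMod Λ)
    (e : (C.1 : Type) ≃ₗ[Λ] ((A.1 : Type) × (B.1 : Type))) :
    omegaClass C = omegaClass A + omegaClass B := by
  obtain ⟨m, f, hf⟩ := exists_free_cover A
  obtain ⟨n, g, hg⟩ := exists_free_cover B
  rw [omegaClass_eq A f hf, omegaClass_eq B g hg,
    omegaClass_eq C (e.symm.toLinearMap ∘ₗ f.prodMap g)
      (e.symm.surjective.comp (hf.prodMap hg))]
  have hk : LinearMap.ker (e.symm.toLinearMap ∘ₗ f.prodMap g) =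
      (LinearMap.ker f).prod (LinearMap.ker g) := by
    rw [LinearEquiv.ker_comp, LinearMap.ker_prodMap]
  let e' : (LinearMap.ker f).prod (LinearMap.ker g) ≃ₗ[Λ] (LinearMap.ker f × LinearMap.ker g) :=
    { toFun := fun x => (⟨x.1.1, x.2.1⟩, ⟨x.1.2, x.2.2⟩)
      invFun := fun y => ⟨(y.1.1, y.2.1), ⟨y.1.2, y.2.2⟩⟩
      map_add' := fun _ _ => rfl
      map_smul' := fun _ _ => rfl
      left_inv := fun _ => rfl
      right_inv := fun _ => rfl }
  exact cls_prod ((LinearEquiv.ofEq _ _ hk).trans e')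

/-- The Igusa–Todorov operator `L : K₀ → K₀`, `[M] ↦ [Ω M]`. -/
def opL [IsNoetherianRing Λ] : K0 Λ →+ K0 Λ :=
  QuotientAddGroup.lift (K0Rel Λ) (FreeAbelianGroup.lift omegaClass) (by
    have : K0Rel Λ ≤ (FreeAbelianGroup.lift (omegaClass (Λ := Λ))).ker := by
      rw [K0Rel, AddSubgroup.closure_le]
      rintro x (⟨A, B, C, ⟨e⟩, rfl⟩ | ⟨P, hP, rfl⟩)
      · rw [SetLike.mem_coe, AddMonoidHom.mem_ker, map_sub, map_sub, FreeAbelianGroup.lift_apply_of,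
          FreeAbelianGroup.lift_apply_of, FreeAbelianGroup.lift_apply_of, omegaClass_add A B C e]
        abel
      · have := P.2
        rw [SetLike.mem_coe, AddMonoidHom.mem_ker, FreeAbelianGroup.lift_apply_of,
          omegaClass_eq P (LinearMap.id : (P.1 : Type) →ₗ[Λ] (P.1 : Type)) Function.surjective_id]
        have : Subsingleton (LinearMap.ker (LinearMap.id : (P.1 : Type) →ₗ[Λ] (P.1 : Type))) := by
          rw [LinearMap.ker_id]; infer_instance
        exact cls_projective
    exact this)

lemma opL_classOf [IsNoetherianRing Λ] (M : FGMod Λ) : opL (classOf Λ M) = omegaClass M :=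
  FreeAbelianGroup.lift_apply_of _ _

lemma opL_cls [IsNoetherianRing Λ] [h : Module.Finite Λ M] [Module.Finite Λ P]
    [Module.Projective Λ P] (f : P →ₗ[Λ] M) (hf : Function.Surjective f) :
    opL (cls (Λ := Λ) M) = cls (Λ := Λ) (LinearMap.ker f) :=
  (opL_classOf _).trans (omegaClass_eq ⟨ModuleCat.of Λ M, h⟩ f hf)

/-! ### Stable homomorphisms as functionals on `K₀` -/

variable (R : Type) [CommRing R] [Algebra R Λ]

/-- The length over `R` of the stable homomorphism module from `A` to `M`; the `R`-module structure
on `M` is the one restricted from `Λ`. -/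
def stLen (A : Type) [AddCommGroup A] [Module Λ A] (M : Type) [AddCommGroup M] [Module Λ M] : ℕ∞ :=
  letI := Module.restrictScalars R Λ M
  haveI := IsScalarTower.restrictScalars R Λ M
  Module.length R (StHom R Λ A M)

variable (A : Type) [AddCommGroup A] [Module Λ A]

lemma stLen_ne_top [IsArtinianRing R] [Module.Finite R Λ] [Module.Finite Λ A]
    [Module.Finite Λ M] : stLen (Λ := Λ) R A M ≠ ⊤ :=
  let _ := Module.restrictScalars R Λ M
  have := IsScalarTower.restrictScalars R Λ M
  length_stHom_ne_top R

lemma stLen_prod (e : P ≃ₗ[Λ] (M × N)) :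
    stLen (Λ := Λ) R A P = stLen (Λ := Λ) R A M + stLen (Λ := Λ) R A N :=
  let _ := Module.restrictScalars R Λ M
  have := IsScalarTower.restrictScalars R Λ M
  let _ := Module.restrictScalars R Λ N
  have := IsScalarTower.restrictScalars R Λ N
  let _ := Module.restrictScalars R Λ P
  have := IsScalarTower.restrictScalars R Λ P
  length_stHom_prod R A e

lemma stLen_projective [Module.Projective Λ P] : stLen (Λ := Λ) R A P = 0 :=
  let _ := Module.restrictScalars R Λ P
  have := IsScalarTower.restrictScalars R Λ P
  length_stHom_projective R A

/-- For a fixed `A`, the length of the stable homomorphism module `Hom(A, M)` is additive on direct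
sums and vanishes on projectives, so it defines a functional on `K₀`. -/
lemma exists_stable_functional [IsArtinianRing R] [Module.Finite R Λ] [Module.Finite Λ A] :
    ∃ h : K0 Λ →+ ℤ, ∀ M : FGMod Λ, h (classOf Λ M) = (stLen (Λ := Λ) R A M.1).toNat := by
  let h0 : FGMod Λ → ℤ := fun M => (stLen (Λ := Λ) R A M.1).toNat
  refine ⟨QuotientAddGroup.lift (K0Rel Λ) (FreeAbelianGroup.lift h0) ?_,
    fun M => FreeAbelianGroup.lift_apply_of _ _⟩
  have : K0Rel Λ ≤ (FreeAbelianGroup.lift h0).ker := by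
    rw [K0Rel, AddSubgroup.closure_le]
    rintro x (⟨A', B', C', ⟨e⟩, rfl⟩ | ⟨P', hP, rfl⟩)
    · have := A'.2
      have := B'.2
      rw [SetLike.mem_coe, AddMonoidHom.mem_ker, map_sub, map_sub, FreeAbelianGroup.lift_apply_of,
        FreeAbelianGroup.lift_apply_of, FreeAbelianGroup.lift_apply_of]
      simp only [h0]
      rw [stLen_prod R A e, ENat.toNat_add (stLen_ne_top R A) (stLen_ne_top R A)]
      push_cast
      ring
    · rw [SetLike.mem_coe, AddMonoidHom.mem_ker, FreeAbelianGroup.lift_apply_of]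
      simp only [h0]
      rw [stLen_projective R A]
      rfl
  exact this

end K0

/-! ### Uniserial modules -/

section Uniserial

variable {Λ : Type} [Ring Λ]

/-- Unbundled form of `IsUniserial`. -/
def Uni (Λ : Type) [Ring Λ] (M : Type) [AddCommGroup M] [Module Λ M] : Prop :=
  ∀ N₁ N₂ : Submodule Λ M, N₁ ≤ N₂ ∨ N₂ ≤ N₁

variable {M N T : Type} [AddCommGroup M] [Module Λ M] [AddCommGroup N] [Module Λ N]
  [AddCommGroup T] [Module Λ T]

lemma Uni.of_injective (h : Uni Λ M) (f : N →ₗ[Λ] M) (hf : Function.Injective f) : Uni Λ N := by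
  intro N₁ N₂
  rw [← Submodule.map_le_map_iff_of_injective hf, ← Submodule.map_le_map_iff_of_injective hf N₂]
  exact h _ _

lemma Uni.of_surjective (h : Uni Λ M) (f : M →ₗ[Λ] N) (hf : Function.Surjective f) : Uni Λ N := by
  intro N₁ N₂
  rw [← Submodule.comap_le_comap_iff_of_surjective hf,
    ← Submodule.comap_le_comap_iff_of_surjective hf (p := N₂)]
  exact h _ _

lemma Uni.sup_eq_top (h : Uni Λ M) {A B : Submodule Λ M} (hA : A ≠ ⊤) (hAB : A ⊔ B = ⊤) :
    B = ⊤ := by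
  rcases h A B with h1 | h1
  · rwa [sup_eq_right.2 h1] at hAB
  · rw [sup_eq_left.2 h1] at hAB
    exact absurd hAB hA

lemma Uni.indec (h : Uni Λ M) [Nontrivial M] : Indec Λ (ModuleCat.of Λ M) := by
  refine ⟨‹_›, fun A B hAB => ?_⟩
  by_cases hA : A = ⊤
  · right
    have := hAB.disjoint.eq_bot
    rwa [hA, top_inf_eq] at this
  · left
    have hB : B = ⊤ := Uni.sup_eq_top (M := M) h hA hAB.codisjoint.eq_top
    have := hAB.disjoint.eq_bot
    rwa [hB, inf_top_eq] at this

lemma Uni.le_ker (h : Uni Λ M) [IsSimpleModule Λ T] (f : M →ₗ[Λ] T) (hf : Function.Surjective f)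
    {A : Submodule Λ M} (hA : A ≠ ⊤) : A ≤ LinearMap.ker f := by
  rcases h A (LinearMap.ker f) with h1 | h1
  · exact h1
  · have hco : IsCoatom (LinearMap.ker f) := by
      rw [← isSimpleModule_iff_isCoatom]
      exact IsSimpleModule.congr (f.quotKerEquivOfSurjective hf)
    rcases hco.le_iff.1 h1 with h2 | h2
    · exact absurd h2 hA
    · exact h2.le

lemma ker_ne_top [IsSimpleModule Λ T] (f : M →ₗ[Λ] T) (hf : Function.Surjective f) :
    LinearMap.ker f ≠ ⊤ := by
  intro h
  have := IsSimpleModule.nontrivial Λ T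
  obtain ⟨t, ht⟩ := exists_ne (0 : T)
  obtain ⟨m, rfl⟩ := hf t
  exact ht (LinearMap.mem_ker.1 (h ▸ Submodule.mem_top))

lemma Uni.radical_eq (h : Uni Λ M) [IsSimpleModule Λ T] (f : M →ₗ[Λ] T)
    (hf : Function.Surjective f) : radical Λ M = LinearMap.ker f :=
  le_antisymm (sSup_le fun _ hA => h.le_ker f hf hA) (le_sSup (ker_ne_top f hf))

lemma le_radical {A : Submodule Λ M} (hA : A ≠ ⊤) : A ≤ radical Λ M := le_sSup hA

lemma Uni.eq_of_length_eq (h : Uni Λ M) [IsNoetherian Λ M] [IsArtinian Λ M] {A B : Submodule Λ M}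
    (hAB : Module.length Λ A = Module.length Λ B) : A = B := by
  have hm : StrictMono (Order.height : Submodule Λ M → ℕ∞) := Submodule.height_strictMono
  rw [Module.length_submodule, Module.length_submodule] at hAB
  rcases h A B with h1 | h1
  · exact h1.eq_or_lt.resolve_right fun h2 => (hm h2).ne hAB
  · exact (h1.eq_or_lt.resolve_right fun h2 => (hm h2).ne hAB.symm).symm

/-- A uniserial module of finite length has finitely many submodules: they are determined by
their length. -/
lemma Uni.finite_submodule (h : Uni Λ M) [IsNoetherian Λ M] [IsArtinian Λ M] :
    Finite (Submodule Λ M) := by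
  have hfin : Module.length Λ M ≠ ⊤ := Module.length_ne_top
  have : ∀ A : Submodule Λ M, (Module.length Λ A).toNat < (Module.length Λ M).toNat + 1 :=
    fun A => Nat.lt_succ_of_le (ENat.toNat_le_toNat
      (Module.length_le_of_injective A.subtype A.injective_subtype) hfin)
  refine Finite.of_injective
    (fun A => (⟨_, this A⟩ : Fin ((Module.length Λ M).toNat + 1))) fun A B hAB => ?_
  have h1 : (Module.length Λ A).toNat = (Module.length Λ B).toNat := congrArg Fin.val hAB
  refine h.eq_of_length_eq ?_
  rw [← ENat.natCast_toNat (Module.length_ne_top (R := Λ) (M := A)), h1,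
    ENat.natCast_toNat Module.length_ne_top]

end Uniserial

/-! ### Modules over a cyclic Nakayama algebra -/

section Presentation

variable {R Λ : Type} [CommRing R] [Ring Λ] [Algebra R Λ] (pres : CyclicNakayama R Λ)
include pres

lemma isArtinianRing_of_pres : IsArtinianRing Λ := by
  have := pres.artinianBase
  have := pres.finiteAlgebra
  exact IsArtinianRing.of_finite R Λ

lemma isNoetherianRing_of_pres : IsNoetherianRing Λ := by
  have := pres.artinianBase
  have := pres.finiteAlgebra
  exact IsNoetherianRing.of_finite R Λ

/-- `M` is a finitely generated uniserial module with top `S i`. -/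
structure HasTop (M : Type) [AddCommGroup M] [Module Λ M] (i : ZMod pres.N) : Prop where
  fin : Module.Finite Λ M
  uni : Uni Λ M
  top : ∃ f : M →ₗ[Λ] pres.S i, Function.Surjective f

variable {pres}
variable {M Y : Type} [AddCommGroup M] [Module Λ M] [AddCommGroup Y] [Module Λ Y]
  {i : ZMod pres.N}

lemma HasTop.nontrivial (h : HasTop pres M i) : Nontrivial M := by
  obtain ⟨f, hf⟩ := h.top
  have := pres.S_simple i
  have := IsSimpleModule.nontrivial Λ (pres.S i)
  exact hf.nontrivial

lemma HasTop.indec (h : HasTop pres M i) : Indec Λ (ModuleCat.of Λ M) :=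
  have := h.nontrivial
  h.uni.indec

lemma HasTop.topIso (h : HasTop pres M i) : TopIso Λ (ModuleCat.of Λ M) (pres.S i) := by
  obtain ⟨f, hf⟩ := h.top
  have := pres.S_simple i
  exact ⟨(Submodule.quotEquivOfEq _ _ (h.uni.radical_eq f hf)).trans
    (f.quotKerEquivOfSurjective hf)⟩

lemma HasTop.of_surjective (h : HasTop pres M i) [Nontrivial Y] (f : M →ₗ[Λ] Y)
    (hf : Function.Surjective f) : HasTop pres Y i := by
  obtain ⟨t, ht⟩ := h.top
  have := pres.S_simple i
  have hle : LinearMap.ker f ≤ LinearMap.ker t := by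
    refine h.uni.le_ker t ht fun htop => ?_
    obtain ⟨y, hy⟩ := exists_ne (0 : Y)
    obtain ⟨m, rfl⟩ := hf y
    exact hy (LinearMap.mem_ker.1 (htop ▸ Submodule.mem_top))
  have := h.fin
  refine ⟨Module.Finite.of_surjective f hf, h.uni.of_surjective f hf,
    (LinearMap.ker f).liftQ t hle ∘ₗ (f.quotKerEquivOfSurjective hf).symm.toLinearMap, ?_⟩
  refine Function.Surjective.comp (g := (LinearMap.ker f).liftQ t hle) ?_
    (f.quotKerEquivOfSurjective hf).symm.surjective
  rw [← LinearMap.range_eq_top, Submodule.range_liftQ, LinearMap.range_eq_top.2 ht]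

/-- A module with top `S i` is a quotient of `P i`. -/
lemma HasTop.exists_cover (h : HasTop pres M i) :
    ∃ p : pres.P i →ₗ[Λ] M, Function.Surjective p := by
  obtain ⟨t, ht⟩ := h.top
  obtain ⟨f, hP, hf, -⟩ := pres.P_cover i
  have := pres.S_simple i
  obtain ⟨p, hp⟩ := Module.projective_lifting_property t f ht
  refine ⟨p, ?_⟩
  rw [← LinearMap.range_eq_top]
  by_contra hne
  refine ker_ne_top f hf (eq_top_iff.2 fun x _ => ?_)
  have h1 := h.uni.le_ker t ht hne (LinearMap.mem_range_self p x)
  rw [LinearMap.mem_ker] at h1 ⊢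
  rw [← hp]
  exact h1

/-- `P i` is indecomposable because the kernel of `P i → S i` is superfluous and maximal. -/
lemma hasTop_P (i : ZMod pres.N) : HasTop pres (pres.P i) i := by
  obtain ⟨f, hP, hf, hsup⟩ := pres.P_cover i
  have := pres.S_simple i
  refine ⟨pres.P_finite i, pres.nakayama _ (pres.P_finite i) ⟨?_, fun A B hAB => ?_⟩, f, hf⟩
  · have := IsSimpleModule.nontrivial Λ (pres.S i)
    exact hf.nontrivial
  · have hco : IsCoatom (LinearMap.ker f) := by
      rw [← isSimpleModule_iff_isCoatom]
      exact IsSimpleModule.congr (f.quotKerEquivOfSurjective hf)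
    have key : ∀ A B : Submodule Λ (pres.P i), IsCompl A B → ¬ A ≤ LinearMap.ker f → B = ⊥ := by
      intro A B hAB hA
      have h1 : A ⊔ LinearMap.ker f = ⊤ := by
        refine (hco.le_iff.1 le_sup_right).resolve_right fun h2 => hA ?_
        rw [← h2]
        exact le_sup_left
      have h2 := hAB.disjoint.eq_bot
      rwa [hsup A h1, top_inf_eq] at h2
    by_cases hA : A ≤ LinearMap.ker f
    · left
      refine key B A hAB.symm fun hB => hco.1 ?_
      rw [eq_top_iff, ← hAB.codisjoint.eq_top]
      exact sup_le hA hB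
    · right
      exact key A B hAB hA

variable (pres) in
lemma exists_hasTop (hfin : Module.Finite Λ M) (hu : Uni Λ M) [Nontrivial M] :
    ∃ i, HasTop pres M i := by
  obtain ⟨A, hA, -⟩ := (eq_top_or_exists_le_coatom (⊥ : Submodule Λ M)).resolve_left bot_ne_top
  have hs : IsSimpleModule Λ (M ⧸ A) := isSimpleModule_iff_isCoatom.2 hA
  obtain ⟨i, ⟨e⟩⟩ := pres.S_complete (ModuleCat.of Λ (M ⧸ A)) hs
  exact ⟨i, hfin, hu, e.toLinearMap ∘ₗ A.mkQ, e.surjective.comp A.mkQ_surjective⟩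

/-- The maximal submodule of a module with top `S i` has top `S (i + 1)`, if it is nonzero. -/
lemma HasTop.rad (h : HasTop pres M i) (hne : radical Λ M ≠ ⊥) :
    HasTop pres (radical Λ M) (i + 1) := by
  have hN := isNoetherianRing_of_pres pres
  have := h.fin
  obtain ⟨e⟩ := pres.layer (ModuleCat.of Λ M) h.fin h.indec i h.topIso hne
  exact ⟨inferInstance, h.uni.of_injective (radical Λ M).subtype (radical Λ M).injective_subtype,
    e.toLinearMap ∘ₗ Submodule.mkQ _, e.surjective.comp (Submodule.mkQ_surjective _)⟩

lemma HasTop.length_rad (h : HasTop pres M i) :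
    Module.length Λ M = Module.length Λ (radical Λ M) + 1 := by
  obtain ⟨e⟩ := h.topIso
  have := pres.S_simple i
  have e' : (M ⧸ radical Λ M) ≃ₗ[Λ] pres.S i := e
  have h1 : Module.length Λ (M ⧸ radical Λ M) = 1 := by
    rw [e'.length_eq]; exact Module.length_eq_one Λ _
  rw [← h1]
  exact Module.length_eq_add_of_exact (radical Λ M).subtype (radical Λ M).mkQ
    (radical Λ M).injective_subtype (radical Λ M).mkQ_surjective (LinearMap.exact_subtype_mkQ _)

lemma HasTop.radical_ne_top (h : HasTop pres M i) : radical Λ M ≠ ⊤ := by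
  obtain ⟨t, ht⟩ := h.top
  have := pres.S_simple i
  rw [h.uni.radical_eq t ht]
  exact ker_ne_top t ht

/-- A nonzero submodule of colength `l` of a module with top `S i` has top `S (i + l)`. -/
lemma HasTop.of_injective (l : ℕ) (M : Type) [AddCommGroup M] [Module Λ M] (i : ZMod pres.N)
    (h : HasTop pres M i) [Nontrivial Y] (g : Y →ₗ[Λ] M) (hg : Function.Injective g)
    (hl : Module.length Λ M = Module.length Λ Y + l) : HasTop pres Y (i + l) := by
  have hN := isNoetherianRing_of_pres pres
  have hAr := isArtinianRing_of_pres pres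
  induction l generalizing M i with
  | zero =>
    have := h.fin
    have hsurj : LinearMap.range g = ⊤ := by
      refine h.uni.eq_of_length_eq ?_
      rw [← (LinearEquiv.ofInjective g hg).length_eq, Module.length_top, hl]
      simp
    let e := LinearEquiv.ofBijective g ⟨hg, LinearMap.range_eq_top.1 hsurj⟩
    simpa using h.of_surjective e.symm.toLinearMap e.symm.surjective
  | succ l ih =>
    have := h.fin
    have hY : Module.length Λ Y ≠ ⊤ := by
      refine ne_top_of_le_ne_top (Module.length_ne_top (R := Λ) (M := M)) ?_
      rw [hl]; exact le_self_add
    have hne : LinearMap.range g ≠ ⊤ := by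
      intro htop
      have h1 := (LinearEquiv.ofBijective g ⟨hg, LinearMap.range_eq_top.1 htop⟩).length_eq
      rw [hl] at h1
      lift Module.length Λ Y to ℕ using hY with y
      norm_cast at h1
      omega
    have hle : ∀ y, g y ∈ radical Λ M := fun y =>
      le_radical hne (LinearMap.mem_range_self g y)
    have hrne : radical Λ M ≠ ⊥ := by
      intro hbot
      obtain ⟨y, hy⟩ := exists_ne (0 : Y)
      have := hle y
      rw [hbot, Submodule.mem_bot] at this
      exact hy (hg (by rw [this, map_zero]))
    have h2 := ih _ _ (h.rad hrne) (g.codRestrict _ hle)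
      (fun a b hab => hg (congrArg Subtype.val hab)) (by
        have h3 := h.length_rad
        rw [hl] at h3
        have hr : Module.length Λ (radical Λ M) ≠ ⊤ := Module.length_ne_top
        lift Module.length Λ Y to ℕ using hY with y
        lift Module.length Λ (radical Λ M) to ℕ using hr with r
        norm_cast at h3 ⊢
        omega)
    convert h2 using 1
    push_cast
    ring

/-- A uniserial module is determined by its top and its length. -/
lemma HasTop.equiv_of_length_eq (h : HasTop pres M i) (h' : HasTop pres Y i)
    (hl : Module.length Λ M = Module.length Λ Y) : Nonempty (M ≃ₗ[Λ] Y) := by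
  have hN := isNoetherianRing_of_pres pres
  have hAr := isArtinianRing_of_pres pres
  obtain ⟨p, hp⟩ := h.exists_cover
  obtain ⟨q, hq⟩ := h'.exists_cover
  have hP := hasTop_P (pres := pres) i
  have := hP.fin
  have := h'.fin
  have h1 := Module.length_eq_add_of_exact (LinearMap.ker p).subtype p
    (LinearMap.ker p).injective_subtype hp (LinearMap.exact_subtype_ker_map p)
  have h2 := Module.length_eq_add_of_exact (LinearMap.ker q).subtype q
    (LinearMap.ker q).injective_subtype hq (LinearMap.exact_subtype_ker_map q)
  have hk : LinearMap.ker p = LinearMap.ker q := by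
    refine hP.uni.eq_of_length_eq ?_
    rw [h1, hl] at h2
    exact WithTop.add_right_cancel Module.length_ne_top h2
  exact ⟨(p.quotKerEquivOfSurjective hp).symm.trans
    ((Submodule.quotEquivOfEq _ _ hk).trans (q.quotKerEquivOfSurjective hq))⟩

/-- The first syzygy of the module with top `S i` and length `l` has top `S (i + l)` and
complementary length. -/
lemma HasTop.exists_syzygy [IsNoetherianRing Λ] (X : FGMod Λ) (h : HasTop pres X.1 i) {l m : ℕ}
    (hX : Module.length Λ X.1 = l) (hP : Module.length Λ (pres.P i) = l + m) (hm : 0 < m) :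
    ∃ Y : FGMod Λ, HasTop pres Y.1 (i + l) ∧ Module.length Λ Y.1 = m ∧
      opL (classOf Λ X) = classOf Λ Y := by
  obtain ⟨p, hp⟩ := h.exists_cover
  have hPi := hasTop_P (pres := pres) i
  have := hPi.fin
  have := pres.P_projective i
  have h1 := Module.length_eq_add_of_exact (LinearMap.ker p).subtype p
    (LinearMap.ker p).injective_subtype hp (LinearMap.exact_subtype_ker_map p)
  have h2 : Module.length Λ (LinearMap.ker p) = m := by
    rw [h1, hX] at hP
    exact WithTop.add_right_cancel (ENat.natCast_ne_top l) (hP.trans (add_comm _ _))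
  have hnt : Nontrivial (LinearMap.ker p) := by
    rw [← Module.length_pos_iff (R := Λ), h2]
    exact_mod_cast hm
  refine ⟨⟨ModuleCat.of Λ (LinearMap.ker p), (inferInstance : Module.Finite Λ (LinearMap.ker p))⟩,
    ?_, h2, ?_⟩
  · exact HasTop.of_injective l _ i hPi (LinearMap.ker p).subtype
      (LinearMap.ker p).injective_subtype (by rw [hP, h2, add_comm])
  · rw [opL_classOf]
    exact omegaClass_eq X p hp

variable (pres) in
/-- Every indecomposable is a quotient of one of the finitely many uniserial modules `P i`, which
have finitely many submodules. -/
lemma finite_classes :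
    {k : K0 Λ | ∃ X : FGMod Λ, Indec Λ X.1 ∧ k = classOf Λ X}.Finite := by
  have hN := isNoetherianRing_of_pres pres
  have hAr := isArtinianRing_of_pres pres
  have : NeZero pres.N := ⟨by have := pres.three_le_N; omega⟩
  have hPf : ∀ i, Module.Finite Λ (pres.P i) := pres.P_finite
  have : ∀ i, Finite (Submodule Λ (pres.P i)) := fun i => (hasTop_P i).uni.finite_submodule
  refine (Set.finite_range
    (fun x : Σ i, Submodule Λ (pres.P i) => cls (Λ := Λ) (pres.P x.1 ⧸ x.2))).subset ?_
  rintro k ⟨X, hX, rfl⟩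
  have hnt := hX.1
  have hXf := X.2
  obtain ⟨i, hi⟩ := exists_hasTop pres X.2 (pres.nakayama _ X.2 hX)
  obtain ⟨p, hp⟩ := hi.exists_cover
  exact ⟨⟨i, LinearMap.ker p⟩, cls_congr (p.quotKerEquivOfSurjective hp)⟩

variable (pres) in
/-- Projective covers of finitely generated uniserial modules exist: a nonzero one is covered by
some `P i`, where every proper submodule is superfluous. -/
lemma exists_isSyzygy (X : ModuleCat.{0} Λ) (hf : Module.Finite Λ X) (hu : Uni Λ X) :
    ∃ Y : ModuleCat.{0} Λ, Module.Finite Λ Y ∧ Uni Λ Y ∧ IsSyzygy Λ Y X := by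
  have hN := isNoetherianRing_of_pres pres
  rcases subsingleton_or_nontrivial X with hX | hX
  · refine ⟨X, hf, hu, X, LinearMap.id, ⟨?_, Function.surjective_id, ?_⟩, ?_⟩
    · exact Module.Projective.of_free
    · intro N _
      exact Subsingleton.elim _ _
    · have : Subsingleton (LinearMap.ker (LinearMap.id : X →ₗ[Λ] X)) := inferInstance
      exact ⟨LinearEquiv.ofSubsingleton _ _⟩
  · obtain ⟨i, hi⟩ := exists_hasTop pres hf hu
    obtain ⟨p, hp⟩ := hi.exists_cover
    have hP := hasTop_P (pres := pres) i
    have := hP.fin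
    refine ⟨ModuleCat.of Λ (LinearMap.ker p), (inferInstance : Module.Finite Λ (LinearMap.ker p)),
      hP.uni.of_injective (LinearMap.ker p).subtype (LinearMap.ker p).injective_subtype,
      pres.P i, p, ⟨pres.P_projective i, hp, fun N hN => ?_⟩, ⟨LinearEquiv.refl _ _⟩⟩
    refine hP.uni.sup_eq_top (fun htop => ?_) (sup_comm N _ ▸ hN)
    obtain ⟨x, hx⟩ := exists_ne (0 : X)
    obtain ⟨m, rfl⟩ := hp x
    exact hx (LinearMap.mem_ker.1 (htop ▸ Submodule.mem_top))

variable (pres) in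
lemma exists_isNthSyzygy (t : ℕ) (X : ModuleCat.{0} Λ) (hf : Module.Finite Λ X) (hu : Uni Λ X) :
    ∃ Y : FGMod Λ, IsNthSyzygy Λ t Y.1 X := by
  induction t generalizing X with
  | zero => exact ⟨⟨X, hf⟩, ⟨LinearEquiv.refl _ _⟩⟩
  | succ t ih =>
    obtain ⟨Z, hZ, hZu, hs⟩ := exists_isSyzygy pres X hf hu
    obtain ⟨Y, hY⟩ := ih Z hZ hZu
    exact ⟨Y, Z, hs, hY⟩

end Presentation

/-! ### Syzygies and the operator `L` -/

section Syzygy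

variable {Λ : Type} [Ring Λ] [IsNoetherianRing Λ]

/-- The operator `L` agrees with syzygies taken from arbitrary projective covers, whose source is
automatically finitely generated. -/
lemma classOf_isSyzygy (X : FGMod Λ) (Y : ModuleCat.{0} Λ) (h : IsSyzygy Λ Y X.1) :
    ∃ hY : Module.Finite Λ Y, classOf Λ ⟨Y, hY⟩ = opL (classOf Λ X) := by
  obtain ⟨P, f, ⟨hP, hf, hsup⟩, ⟨e⟩⟩ := h
  have hX := X.2
  -- lifts of generators of `X` span a submodule which together with the superfluous kernel is `P`
  have hPf : Module.Finite Λ P := by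
    obtain ⟨n, s, hs⟩ := Module.Finite.exists_fin (R := Λ) (M := X.1)
    choose s' hs' using fun k => hf (s k)
    have h1 : Submodule.span Λ (Set.range s') = ⊤ := by
      apply hsup
      rw [← Submodule.comap_map_eq, Submodule.map_span, ← Set.range_comp]
      have : (f ∘ s') = s := funext hs'
      rw [this, hs, Submodule.comap_top]
    exact ⟨h1 ▸ Submodule.fg_span (Set.finite_range s')⟩
  have hY : Module.Finite Λ Y := Module.Finite.equiv e.symm
  refine ⟨hY, ?_⟩
  rw [opL_classOf, omegaClass_eq X f hf]
  exact cls_congr e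

lemma classOf_isNthSyzygy (t : ℕ) (X Y : FGMod Λ) (h : IsNthSyzygy Λ t Y.1 X.1) :
    classOf Λ Y = (opL (Λ := Λ))^[t] (classOf Λ X) := by
  induction t generalizing X with
  | zero =>
    obtain ⟨e⟩ := h
    have := X.2
    have := Y.2
    exact cls_congr e
  | succ t ih =>
    obtain ⟨Z, hZ, hY⟩ := h
    obtain ⟨hZf, hZc⟩ := classOf_isSyzygy X Z hZ
    rw [ih ⟨Z, hZf⟩ hY, hZc, Function.iterate_succ_apply]

end Syzygy

/-! ### Ranks of the subgroups `L^t ⟨add M⟩` and `φ` -/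

/-- The rank of a finitely generated subgroup drops under `f` if the subgroup contains an element
of `ker f` of infinite order; that the order is infinite is witnessed by the functional `h`. -/
lemma rank_map_lt {K : Type*} [AddCommGroup K] (G : AddSubgroup K) [Module.Finite ℤ G]
    (f : K →+ K) (b : K) (hb : b ∈ G) (hfb : f b = 0) (h : K →+ ℤ) (hhb : h b ≠ 0) :
    Module.rank ℤ (G.map f) < Module.rank ℤ G := by
  let F : G →ₗ[ℤ] G.map f := (f.addSubgroupMap G).toIntLinearMap
  have hF : Function.Surjective F := f.addSubgroupMap_surjective G
  have h1 := LinearMap.rank_eq_of_surjective hF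
  have hmem : (⟨b, hb⟩ : G) ∈ LinearMap.ker F := by
    rw [LinearMap.mem_ker]
    exact Subtype.ext hfb
  have hpos : Module.rank ℤ (LinearMap.ker F) ≠ 0 := by
    intro h0
    rw [rank_eq_zero_iff] at h0
    obtain ⟨n, hn, hnb⟩ := h0 ⟨_, hmem⟩
    have h2 : n • b = 0 := congrArg (fun x : LinearMap.ker F => ((x : G) : K)) hnb
    have h3 := congrArg h h2
    rw [map_zsmul, map_zero, smul_eq_mul] at h3
    exact (mul_ne_zero hn hhb) h3
  have hfin : Module.rank ℤ G < Cardinal.aleph0 := Module.rank_lt_aleph0 ℤ G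
  have hfin2 : Module.rank ℤ (G.map f) < Cardinal.aleph0 :=
    lt_of_le_of_lt (LinearMap.rank_le_of_surjective F hF) hfin
  have hfin3 : Module.rank ℤ (LinearMap.ker F) < Cardinal.aleph0 :=
    lt_of_le_of_lt (Submodule.rank_le _) hfin
  rw [h1]
  obtain ⟨m, hm⟩ := Cardinal.lt_aleph0.1 hfin2
  obtain ⟨n, hn⟩ := Cardinal.lt_aleph0.1 hfin3
  rw [hn] at hpos ⊢
  rw [hm]
  norm_cast at hpos ⊢
  omega

section Rank

variable {R Λ : Type} [CommRing R] [Ring Λ] [Algebra R Λ] (pres : CyclicNakayama R Λ)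
  [IsNoetherianRing Λ]
include pres

/-- The generators of `L^t ⟨add M⟩` are the images under `L^t` of the classes of the indecomposable
summands of `M`. -/
lemma addGens_eq (M : FGMod Λ) (t : ℕ) :
    addGens Λ M.1 t = (opL (Λ := Λ))^[t] ''
      {k | ∃ X : FGMod Λ, Indec Λ X.1 ∧ IsSummand Λ X.1 M.1 ∧ k = classOf Λ X} := by
  have := M.2
  ext k
  constructor
  · rintro ⟨X, hX, hXM, Y, hY, rfl⟩
    obtain ⟨N, N', hNN, ⟨e⟩⟩ := hXM
    have hXf : Module.Finite Λ X := Module.Finite.equiv e.symm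
    exact ⟨_, ⟨⟨X, hXf⟩, hX, ⟨N, N', hNN, ⟨e⟩⟩, rfl⟩, (classOf_isNthSyzygy t ⟨X, hXf⟩ Y hY).symm⟩
  · rintro ⟨_, ⟨X, hX, hXM, rfl⟩, rfl⟩
    obtain ⟨Y, hY⟩ := exists_isNthSyzygy pres t X.1 X.2 (pres.nakayama _ X.2 hX)
    exact ⟨X.1, hX, hXM, Y, hY, (classOf_isNthSyzygy t X Y hY).symm⟩

lemma closure_addGens_succ (M : FGMod Λ) (t : ℕ) :
    AddSubgroup.closure (addGens Λ M.1 (t + 1)) =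
      (AddSubgroup.closure (addGens Λ M.1 t)).map opL := by
  rw [AddMonoidHom.map_closure, addGens_eq pres, addGens_eq pres, ← Set.image_comp,
    Function.iterate_succ']

lemma finite_closure (M : FGMod Λ) (t : ℕ) :
    Module.Finite ℤ (AddSubgroup.closure (addGens Λ M.1 t)) := by
  have h0 : (addGens Λ M.1 t).Finite := by
    rw [addGens_eq pres]
    refine Set.Finite.image _ ((finite_classes pres).subset ?_)
    rintro k ⟨X, hX, -, rfl⟩
    exact ⟨X, hX, rfl⟩
  have : Finite (addGens Λ M.1 t) := h0
  rw [Module.Finite.iff_addGroup_fg]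
  infer_instance

lemma syzygyRank_antitone (M : FGMod Λ) : Antitone (syzygyRank Λ M.1) := by
  refine antitone_nat_of_succ_le fun t => ?_
  unfold syzygyRank
  rw [closure_addGens_succ pres]
  exact LinearMap.rank_le_of_surjective
    ((opL (Λ := Λ)).addSubgroupMap (AddSubgroup.closure (addGens Λ M.1 t))).toIntLinearMap
    (AddMonoidHom.addSubgroupMap_surjective _ _)

/-- The ranks form a nonincreasing sequence of cardinals, so the minimum defining `φ` exists. -/
lemma phi_spec (M : FGMod Λ) (j : ℕ) :
    syzygyRank Λ M.1 (phi Λ M.1 + j) = syzygyRank Λ M.1 (phi Λ M.1) := by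
  have hanti := syzygyRank_antitone pres M
  have hne : {t : ℕ | ∀ j : ℕ, 1 ≤ j →
      syzygyRank Λ M.1 (t + j) = syzygyRank Λ M.1 t}.Nonempty := by
    obtain ⟨t, ht⟩ := WellFounded.has_min (wellFounded_lt (α := Cardinal))
      (Set.range (syzygyRank Λ M.1)) ⟨_, 0, rfl⟩
    obtain ⟨⟨t, rfl⟩, hmin⟩ := ht
    exact ⟨t, fun j _ => le_antisymm (hanti (Nat.le_add_right t j)) (not_lt.1 (hmin _ ⟨_, rfl⟩))⟩
  rcases Nat.eq_zero_or_pos j with rfl | hj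
  · rfl
  · exact Nat.sInf_mem hne j hj

/-- If `⟨add M⟩` contains an `a` with `L a` of infinite order and `L² a = 0`, then the rank drops
from `t = 1` to `t = 2`. -/
lemma two_le_phi (M : FGMod Λ) (a : K0 Λ) (ha : a ∈ AddSubgroup.closure (addGens Λ M.1 0))
    (h0 : opL (opL a) = 0) (h : K0 Λ →+ ℤ) (hh : h (opL a) ≠ 0) : 2 ≤ phi Λ M.1 := by
  by_contra hlt
  have h1 : opL a ∈ AddSubgroup.closure (addGens Λ M.1 1) := by
    rw [closure_addGens_succ pres]
    exact AddSubgroup.mem_map_of_mem _ ha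
  have := finite_closure pres M 1
  have h2 := rank_map_lt (AddSubgroup.closure (addGens Λ M.1 1)) opL (opL a) h1 h0 h hh
  rw [← closure_addGens_succ pres] at h2
  have h3 := phi_spec pres M (1 - phi Λ M.1)
  have h4 := phi_spec pres M (2 - phi Λ M.1)
  rw [Nat.add_sub_cancel' (by omega)] at h3 h4
  exact h2.ne (h4.trans h3.symm)

end Rank

/-! ### Lengths of the projectives around the cycle -/

section Main

variable {R Λ : Type} [CommRing R] [Ring Λ] [Algebra R Λ] (pres : CyclicNakayama R Λ)
include pres

lemma coe_c (i : ZMod pres.N) : Module.length Λ (pres.P i) = pres.c i := by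
  obtain ⟨s, h1, h2, h3⟩ := pres.P_length i
  rw [← h3, Module.length_compositionSeries s h1 h2]

lemma length_rad_P (i : ZMod pres.N) :
    Module.length Λ (radical Λ (pres.P i)) + 1 = pres.c i := by
  rw [← coe_c, (hasTop_P i).length_rad]

lemma rad_P_ne_bot (i : ZMod pres.N) : radical Λ (pres.P i) ≠ ⊥ := by
  intro h
  have h1 := length_rad_P pres i
  rw [h, Module.length_bot] at h1
  have h2 := pres.two_le_c i
  norm_cast at h1
  omega

lemma hasTop_rad_P (i : ZMod pres.N) : HasTop pres (radical Λ (pres.P i)) (i + 1) :=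
  (hasTop_P i).rad (rad_P_ne_bot pres i)

/-- A surjection from `P i` onto a nonzero projective module is injective. -/
lemma ker_eq_bot_of_projective {i : ZMod pres.N} {M : Type} [AddCommGroup M] [Module Λ M]
    [Nontrivial M] (p : pres.P i →ₗ[Λ] M) (hp : Function.Surjective p)
    (hM : Module.Projective Λ M) : LinearMap.ker p = ⊥ := by
  obtain ⟨s, hs⟩ := Module.projective_lifting_property p LinearMap.id hp
  have hps : ∀ m, p (s m) = m := fun m => LinearMap.congr_fun hs m
  -- `ker p` and `range s` are complementary, and `P i` is uniserial
  rcases (hasTop_P i).uni (LinearMap.range s) (LinearMap.ker p) with h | h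
  · obtain ⟨m, hm⟩ := exists_ne (0 : M)
    exact absurd ((hps m).symm.trans (h ⟨m, rfl⟩)) hm
  · rw [eq_bot_iff]
    intro x hx
    obtain ⟨m, rfl⟩ := h hx
    rw [LinearMap.mem_ker, hps] at hx
    rw [hx, map_zero]
    exact zero_mem _

lemma c_of_projective {i : ZMod pres.N} (h : Module.Projective Λ (radical Λ (pres.P i))) :
    pres.c i = pres.c (i + 1) + 1 := by
  have hr := hasTop_rad_P pres i
  have := hr.nontrivial
  obtain ⟨p, hp⟩ := hr.exists_cover
  have hk := ker_eq_bot_of_projective pres p hp h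
  let e := LinearEquiv.ofBijective p ⟨LinearMap.ker_eq_bot.1 hk, hp⟩
  have h1 := length_rad_P pres i
  rw [← e.length_eq, coe_c] at h1
  exact_mod_cast h1.symm

lemma c_of_not_projective {i : ZMod pres.N} (h : ¬ Module.Projective Λ (radical Λ (pres.P i))) :
    pres.c i ≤ pres.c (i + 1) := by
  have hr := hasTop_rad_P pres i
  obtain ⟨p, hp⟩ := hr.exists_cover
  have := pres.P_projective (i + 1)
  have h1 := length_rad_P pres i
  have h2 := Module.length_eq_add_of_exact (LinearMap.ker p).subtype p
    (LinearMap.ker p).injective_subtype hp (LinearMap.exact_subtype_ker_map p)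
  have h3 : 0 < Module.length Λ (LinearMap.ker p) := by
    rw [Module.length_pos_iff, Submodule.nontrivial_iff_ne_bot]
    intro hk
    exact h (Module.Projective.of_equiv
      (LinearEquiv.ofBijective p ⟨LinearMap.ker_eq_bot.1 hk, hp⟩))
  rw [coe_c] at h2
  have h4 : (pres.c i : ℕ∞) ≤ pres.c (i + 1) := by
    rw [← h1, h2, add_comm]
    gcongr
    exact Order.one_le_iff_pos.2 h3
  exact_mod_cast h4

/-- If `rad (P i)` is never projective, the lengths of the `P i` are nondecreasing around the
cycle, hence all equal: the selfinjective case. -/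
lemma c_const (h : ∀ i, ¬ Module.Projective Λ (radical Λ (pres.P i))) (i j : ZMod pres.N) :
    pres.c i = pres.c j := by
  have : NeZero pres.N := ⟨by have := pres.three_le_N; omega⟩
  have key : ∀ (k : ℕ) (i : ZMod pres.N), pres.c i ≤ pres.c (i + k) := by
    intro k
    induction k with
    | zero => simp
    | succ k ih =>
      intro i
      refine (ih i).trans ((c_of_not_projective pres (h _)).trans_eq ?_)
      push_cast
      ring_nf
  have key2 : ∀ i j, pres.c i ≤ pres.c j := fun i j => by
    have := key (j - i).val i
    rwa [ZMod.natCast_zmod_val, add_sub_cancel] at this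
  exact le_antisymm (key2 i j) (key2 j i)

/-- If every `rad (P i)` were projective, the lengths would decrease strictly around the cycle. -/
lemma exists_not_projective : ∃ i, ¬ Module.Projective Λ (radical Λ (pres.P i)) := by
  by_contra! h
  have key : ∀ (k : ℕ), pres.c 0 = pres.c k + k := by
    intro k
    induction k with
    | zero => simp
    | succ k ih =>
      have := c_of_projective pres (h k)
      push_cast
      omega
  have h1 := key pres.N
  rw [ZMod.natCast_self] at h1
  have := pres.three_le_N
  omega

/-- If some `rad (P i)` is projective, then a nonprojective one is immediately followed by a
projective one somewhere along the cycle. -/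
lemma exists_descent (h : ∃ i, Module.Projective Λ (radical Λ (pres.P i))) :
    ∃ i, ¬ Module.Projective Λ (radical Λ (pres.P i)) ∧
      Module.Projective Λ (radical Λ (pres.P (i + 1))) := by
  by_contra! hno
  have : NeZero pres.N := ⟨by have := pres.three_le_N; omega⟩
  obtain ⟨j, hj⟩ := h
  obtain ⟨i, hi⟩ := exists_not_projective pres
  have key : ∀ k : ℕ, ¬ Module.Projective Λ (radical Λ (pres.P (i + k))) := by
    intro k
    induction k with
    | zero =>
      have e : i + ((0 : ℕ) : ZMod pres.N) = i := by simp
      rw [e]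
      exact hi
    | succ k ih =>
      have e : i + ((k + 1 : ℕ) : ZMod pres.N) = i + k + 1 := by push_cast; ring
      rw [e]
      exact hno _ ih
  have := key (j - i).val
  rw [ZMod.natCast_zmod_val, add_sub_cancel] at this
  exact this hj

/-! ### The selfinjective case -/

/-- In the selfinjective case, `L²` shifts tops by the common length `c` and preserves lengths. -/
lemma exists_second_syzygy [IsNoetherianRing Λ] {c : ℕ} (hc : ∀ i, pres.c i = c) {i : ZMod pres.N}
    (X : FGMod Λ) (hX : HasTop pres X.1 i) {l : ℕ} (hl : Module.length Λ X.1 = l) (hlc : l < c) :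
    ∃ Z : FGMod Λ, HasTop pres Z.1 (i + c) ∧ Module.length Λ Z.1 = l ∧
      opL (opL (classOf Λ X)) = classOf Λ Z := by
  have hl0 : 0 < l := by
    have := hX.nontrivial
    have := Module.length_pos (R := Λ) (M := X.1)
    rw [hl] at this
    exact_mod_cast this
  obtain ⟨Y, hY, hYl, hYc⟩ := hX.exists_syzygy X hl (m := c - l)
    (by rw [coe_c, hc]; norm_cast; omega) (by omega)
  obtain ⟨Z, hZ, hZl, hZc⟩ := hY.exists_syzygy Y hYl (m := l)
    (by rw [coe_c, hc]; norm_cast; omega) hl0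
  refine ⟨Z, ?_, hZl, by rw [hYc, hZc]⟩
  convert hZ using 1
  rw [add_assoc, ← Nat.cast_add, Nat.add_sub_cancel' hlc.le]

/-- In the selfinjective case `L^{2N}` fixes the classes of indecomposables, since the shift of the
top is `N c = 0` in `ℤ/N`. -/
lemma opL_periodic [IsNoetherianRing Λ] {c : ℕ} (hc : ∀ i, pres.c i = c) (X : FGMod Λ)
    (hX : Indec Λ X.1) :
    (opL (Λ := Λ))^[2 * pres.N] (classOf Λ X) = classOf Λ X := by
  have hAr := isArtinianRing_of_pres pres
  have hXf := X.2
  have := hX.1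
  obtain ⟨i, hi⟩ := exists_hasTop pres X.2 (pres.nakayama _ X.2 hX)
  obtain ⟨l, hl⟩ := ENat.ne_top_iff_exists.1 (Module.length_ne_top (R := Λ) (M := X.1))
  obtain ⟨p, hp⟩ := hi.exists_cover
  have hle := Module.length_le_of_surjective p hp
  rw [coe_c, hc, ← hl] at hle
  have hle' : l ≤ c := by exact_mod_cast hle
  rcases hle'.eq_or_lt with rfl | hlt
  · have hPi := hasTop_P (pres := pres) i
    obtain ⟨e⟩ := hi.equiv_of_length_eq hPi (by rw [coe_c, hc, ← hl])
    have hproj : Module.Projective Λ X.1 :=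
      have := pres.P_projective i
      Module.Projective.of_equiv e.symm
    rw [classOf_projective X hproj, iterate_map_zero]
  · have key : ∀ k : ℕ, ∃ Z : FGMod Λ, HasTop pres Z.1 (i + k * c) ∧ Module.length Λ Z.1 = l ∧
        (opL (Λ := Λ))^[2 * k] (classOf Λ X) = classOf Λ Z := by
      intro k
      induction k with
      | zero => exact ⟨X, by simpa using hi, hl.symm, rfl⟩
      | succ k ih =>
        obtain ⟨Z, hZ, hZl, hZc⟩ := ih
        obtain ⟨W, hW, hWl, hWc⟩ := exists_second_syzygy pres hc Z hZ hZl hlt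
        refine ⟨W, ?_, hWl, ?_⟩
        · convert hW using 1
          push_cast
          ring
        · rw [mul_add, mul_one, add_comm, Function.iterate_add_apply, hZc]
          exact hWc
    obtain ⟨Z, hZ, hZl, hZc⟩ := key pres.N
    rw [ZMod.natCast_self, zero_mul, add_zero] at hZ
    obtain ⟨e⟩ := hi.equiv_of_length_eq hZ (by rw [hZl, ← hl])
    have := Z.2
    rw [hZc]
    exact (cls_congr e).symm

/-- In the selfinjective case all the ranks of `L^t ⟨add M⟩` are equal, as `L` acts periodically on
the generators and the ranks are nonincreasing. -/
lemma phi_eq_zero [IsNoetherianRing Λ] {c : ℕ} (hc : ∀ i, pres.c i = c) (M : FGMod Λ) :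
    phi Λ M.1 = 0 := by
  have hanti := syzygyRank_antitone pres M
  have hper : ∀ k : ℕ, addGens Λ M.1 (2 * pres.N * k) = addGens Λ M.1 0 := by
    intro k
    rw [addGens_eq pres, addGens_eq pres, Function.iterate_zero, Set.image_id]
    conv_rhs => rw [← Set.image_id {k | ∃ X : FGMod Λ, _}]
    refine Set.image_congr ?_
    rintro _ ⟨X, hX, -, rfl⟩
    rw [Function.iterate_mul]
    exact Function.iterate_fixed (opL_periodic pres hc X hX) k
  refine Nat.sInf_eq_zero.2 (Or.inl fun j _ => ?_)
  rw [zero_add]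
  refine le_antisymm (hanti (Nat.zero_le j)) ?_
  have h1 : syzygyRank Λ M.1 (2 * pres.N * j) = syzygyRank Λ M.1 0 := by
    unfold syzygyRank
    rw [hper]
  rw [← h1]
  exact hanti (Nat.le_mul_of_pos_left j (by have := pres.three_le_N; omega))

/-! ### The case of a projective radical -/

/-- Let `A = rad (P i)` be nonprojective, `Q = rad (P (i + 1))` projective, `g : P (i + 1) → A` onto
and `B = g Q`. Then `a = [P i / A] - [P i / B]` satisfies `L a = [A] - [B]`, which has infinite order
because stable homomorphisms from `A` tell `A` and `B` apart, and `L² a = [ker g] - [ker g] = 0`. -/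
lemma exists_two_le_phi [IsNoetherianRing Λ] {i : ZMod pres.N}
    (hi : ¬ Module.Projective Λ (radical Λ (pres.P i)))
    (hi' : Module.Projective Λ (radical Λ (pres.P (i + 1)))) :
    ∃ M : FGMod Λ, 2 ≤ phi Λ M.1 := by
  have hAr := isArtinianRing_of_pres pres
  have hRA := pres.artinianBase
  have hRF := pres.finiteAlgebra
  have hPi := hasTop_P (pres := pres) i
  have hPi' := hasTop_P (pres := pres) (i + 1)
  have := hPi.fin
  have := hPi'.fin
  have := pres.P_projective i
  have := pres.P_projective (i + 1)
  have hA := hasTop_rad_P pres i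
  set A := radical Λ (pres.P i) with hAdef
  set Q := radical Λ (pres.P (i + 1)) with hQdef
  obtain ⟨g, hg⟩ := hA.exists_cover
  have := hA.nontrivial
  have hQtop : Q ≠ ⊤ := hPi'.radical_ne_top
  have hkQ : LinearMap.ker g ≤ Q := by
    refine le_radical fun htop => ?_
    obtain ⟨x, hx⟩ := exists_ne (0 : A)
    obtain ⟨m, rfl⟩ := hg x
    exact hx (LinearMap.mem_ker.1 (htop ▸ Submodule.mem_top))
  -- `B` is the image of `Q` in `A`, viewed inside `P i`
  let B : Submodule Λ (pres.P i) := (Q.map g).map A.subtype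
  have hBA : B ≤ A := Submodule.map_subtype_le _ _
  have hAtop : A ≠ ⊤ := hPi.radical_ne_top
  have hBtop : B ≠ ⊤ := fun h => hAtop (top_le_iff.1 (h ▸ hBA))
  have hQg : Q.map g ≠ ⊤ := by
    intro h
    apply hQtop
    rw [← sup_eq_left.2 hkQ, ← Submodule.comap_map_eq, h, Submodule.comap_top]
  have hntX : Nontrivial (pres.P i ⧸ A) := Submodule.Quotient.nontrivial_iff.2 hAtop
  have hntY : Nontrivial (pres.P i ⧸ B) := Submodule.Quotient.nontrivial_iff.2 hBtop
  have hX := hPi.of_surjective A.mkQ A.mkQ_surjective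
  have hY := hPi.of_surjective B.mkQ B.mkQ_surjective
  have hXf := hX.fin
  have hYf := hY.fin
  have hLX : opL (cls (Λ := Λ) (pres.P i ⧸ A)) = cls (Λ := Λ) A := by
    rw [opL_cls A.mkQ A.mkQ_surjective]
    exact cls_congr (LinearEquiv.ofEq _ _ (Submodule.ker_mkQ A))
  have hLY : opL (cls (Λ := Λ) (pres.P i ⧸ B)) = cls (Λ := Λ) B := by
    rw [opL_cls B.mkQ B.mkQ_surjective]
    exact cls_congr (LinearEquiv.ofEq _ _ (Submodule.ker_mkQ B))
  have hLA : opL (cls (Λ := Λ) A) = cls (Λ := Λ) (LinearMap.ker g) := opL_cls g hg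
  -- the restriction of `g` to `Q`, with the same kernel
  let g' : Q →ₗ[Λ] B := LinearMap.codRestrict B (A.subtype ∘ₗ g ∘ₗ Q.subtype)
    fun q => ⟨g q, ⟨q, q.2, rfl⟩, rfl⟩
  have hg' : Function.Surjective g' := by
    rintro ⟨_, _, ⟨q, hq, rfl⟩, rfl⟩
    exact ⟨⟨q, hq⟩, rfl⟩
  have hLB : opL (cls (Λ := Λ) B) = cls (Λ := Λ) (LinearMap.ker g) := by
    rw [opL_cls g' hg']
    have hk : LinearMap.ker g' = (LinearMap.ker g).comap Q.subtype := by
      ext q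
      rw [LinearMap.mem_ker, Submodule.mem_comap, LinearMap.mem_ker, Subtype.ext_iff,
        Subtype.ext_iff]
      rfl
    exact cls_congr ((LinearEquiv.ofEq _ _ hk).trans (Submodule.comapSubtypeEquivOfLe hkQ))
  obtain ⟨h, hh⟩ := exists_stable_functional (Λ := Λ) R A
  have hlt : stLen (Λ := Λ) R A B < stLen (Λ := Λ) R A A := by
    let _ := Module.restrictScalars R Λ A
    have := IsScalarTower.restrictScalars R Λ A
    let _ := Module.restrictScalars R Λ B
    have := IsScalarTower.restrictScalars R Λ B
    have hr : LinearMap.range (Submodule.inclusion hBA) = Q.map g := by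
      rw [Submodule.range_inclusion]
      exact Submodule.comap_map_eq_of_injective A.injective_subtype _
    exact length_stHom_lt R g hg Q hkQ (Submodule.inclusion hBA)
      (Submodule.inclusion_injective hBA) hr
      (fun C hC => hA.uni.sup_eq_top (hr ▸ hQg) hC) hi
  let MM := (pres.P i ⧸ A) × (pres.P i ⧸ B)
  have hsX : IsSummand Λ (ModuleCat.of Λ (pres.P i ⧸ A)) (ModuleCat.of Λ MM) :=
    ⟨LinearMap.range (LinearMap.inl Λ _ _), LinearMap.range (LinearMap.inr Λ _ _),
      LinearMap.isCompl_range_inl_inr, ⟨LinearEquiv.ofInjective _ LinearMap.inl_injective⟩⟩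
  have hsY : IsSummand Λ (ModuleCat.of Λ (pres.P i ⧸ B)) (ModuleCat.of Λ MM) :=
    ⟨LinearMap.range (LinearMap.inr Λ _ _), LinearMap.range (LinearMap.inl Λ _ _),
      LinearMap.isCompl_range_inl_inr.symm, ⟨LinearEquiv.ofInjective _ LinearMap.inr_injective⟩⟩
  refine ⟨⟨ModuleCat.of Λ MM, (inferInstance : Module.Finite Λ MM)⟩, ?_⟩
  refine two_le_phi pres _ (cls (Λ := Λ) (pres.P i ⧸ A) - cls (Λ := Λ) (pres.P i ⧸ B)) ?_ ?_ h ?_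
  · refine sub_mem (AddSubgroup.subset_closure ?_) (AddSubgroup.subset_closure ?_)
    · exact ⟨_, hX.indec, hsX, ⟨_, hXf⟩, ⟨LinearEquiv.refl _ _⟩, rfl⟩
    · exact ⟨_, hY.indec, hsY, ⟨_, hYf⟩, ⟨LinearEquiv.refl _ _⟩, rfl⟩
  · rw [map_sub, map_sub, hLX, hLY, hLA, hLB, sub_self]
  · rw [map_sub, hLX, hLY, map_sub]
    have h1 : h (cls (Λ := Λ) A) = (stLen (Λ := Λ) R A A).toNat := hh _
    have h2 : h (cls (Λ := Λ) B) = (stLen (Λ := Λ) R A B).toNat := hh _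
    rw [h1, h2, sub_ne_zero]
    intro h3
    have h4 : (stLen (Λ := Λ) R A A).toNat = (stLen (Λ := Λ) R A B).toNat := by exact_mod_cast h3
    apply hlt.ne'
    rw [← ENat.natCast_toNat (stLen_ne_top (Λ := Λ) R A (M := A)),
      ← ENat.natCast_toNat (stLen_ne_top (Λ := Λ) R A (M := B)), h4]

end Main

/-- For a cyclic Nakayama artin algebra of infinite global dimension, `φdim Λ ≠ 1`. -/
theorem phiDim_ne_one {R Λ : Type} [CommRing R] [Ring Λ] [Algebra R Λ]
    (pres : CyclicNakayama R Λ) (hglob : HasInfiniteGlobalDim Λ) :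
    phiDim Λ ≠ 1 := by
  have hN := isNoetherianRing_of_pres pres
  by_cases h : ∃ i, Module.Projective Λ (radical Λ (pres.P i))
  · obtain ⟨i, hi, hi'⟩ := exists_descent pres h
    obtain ⟨M, hM⟩ := exists_two_le_phi pres hi hi'
    intro h1
    have h2 : (phi Λ M.1 : ℕ∞) ≤ 1 := h1 ▸ le_iSup (fun M : FGMod Λ => (phi Λ M.1 : ℕ∞)) M
    have h3 : phi Λ M.1 ≤ 1 := by exact_mod_cast h2
    omega
  · push Not at h
    have h0 : phiDim Λ = 0 := by
      unfold phiDim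
      simp [phi_eq_zero pres (fun i => c_const pres h i 0)]
    rw [h0]
    exact zero_ne_one

end PhiDim
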